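/- arXiv:2604.13334 — 3 statements merged into one kernel-verified Lean document; each statement's English description precedes it below -/
import Mathlib

section
/- Fix ε > 0 and P₀ > 0, and let σ be any discrete-time trading strategy. If there exists t < T with w_t ≠ 0 (the strategy takes a nonzero position at some step before T), then the realized profit along the adversarial price path satisfies Π_T < 0 strictly. -/
/-- The adversarial price history against strategy `σ`, stored newest-first:
`advHist ε P₀ σ t = [P t, P (t-1), …, P 0]`.  The strategy `σ` receives the
history in chronological order `(P 0, …, P t)` and returns its position `w t`;
the adversary then moves the price against the position. -/
noncomputable def advHist (ε P₀ : ℝ) (σ : List ℝ → ℝ) : ℕ → List ℝ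
  | 0 => [P₀]
  | t + 1 =>
    let h := advHist ε P₀ σ t
    let w := σ h.reverse
    (if 0 < w then h.headI * Real.exp (-ε)
     else if w < 0 then h.headI * Real.exp ε
     else h.headI) :: h

/-- The adversarial price path: `advPrice ε P₀ σ t = P t`. -/
noncomputable def advPrice (ε P₀ : ℝ) (σ : List ℝ → ℝ) (t : ℕ) : ℝ :=
  (advHist ε P₀ σ t).headI

/-- The position `w t = σ (P 0, …, P t)` taken by the strategy along the
adversarial path. -/
noncomputable def advPos (ε P₀ : ℝ) (σ : List ℝ → ℝ) (t : ℕ) : ℝ :=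
  σ (advHist ε P₀ σ t).reverse

/-- The realized profit `Π_T = ∑_{t<T} w t * (P (t+1) - P t)` along the
adversarial path. -/
noncomputable def advProfit (ε P₀ : ℝ) (σ : List ℝ → ℝ) (T : ℕ) : ℝ :=
  ∑ t ∈ Finset.range T,
    advPos ε P₀ σ t * (advPrice ε P₀ σ (t + 1) - advPrice ε P₀ σ t)

section AdversarialPath

variable {ε P₀ : ℝ} {σ : List ℝ → ℝ} {t : ℕ}

theorem advPrice_succ (ε P₀ : ℝ) (σ : List ℝ → ℝ) (t : ℕ) :
    advPrice ε P₀ σ (t + 1) =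
      if 0 < advPos ε P₀ σ t then advPrice ε P₀ σ t * Real.exp (-ε)
      else if advPos ε P₀ σ t < 0 then advPrice ε P₀ σ t * Real.exp ε
      else advPrice ε P₀ σ t :=
  rfl

theorem advPrice_succ_of_advPos_pos (hw : 0 < advPos ε P₀ σ t) :
    advPrice ε P₀ σ (t + 1) = advPrice ε P₀ σ t * Real.exp (-ε) := by
  rw [advPrice_succ, if_pos hw]

theorem advPrice_succ_of_advPos_neg (hw : advPos ε P₀ σ t < 0) :
    advPrice ε P₀ σ (t + 1) = advPrice ε P₀ σ t * Real.exp ε := by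
  rw [advPrice_succ, if_neg hw.not_gt, if_pos hw]

theorem advPrice_pos (ε : ℝ) (hP₀ : 0 < P₀) (σ : List ℝ → ℝ) (t : ℕ) :
    0 < advPrice ε P₀ σ t := by
  induction t with
  | zero => exact hP₀
  | succ t ih =>
    rw [advPrice_succ]
    split_ifs <;> positivity

theorem advPrice_succ_lt_of_advPos_pos (hε : 0 < ε) (hP₀ : 0 < P₀)
    (hw : 0 < advPos ε P₀ σ t) : advPrice ε P₀ σ (t + 1) < advPrice ε P₀ σ t := by
  rw [advPrice_succ_of_advPos_pos hw]
  exact mul_lt_of_lt_one_right (advPrice_pos ε hP₀ σ t)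
    (Real.exp_lt_one_iff.mpr (neg_neg_of_pos hε))

theorem advPrice_lt_succ_of_advPos_neg (hε : 0 < ε) (hP₀ : 0 < P₀)
    (hw : advPos ε P₀ σ t < 0) : advPrice ε P₀ σ t < advPrice ε P₀ σ (t + 1) := by
  rw [advPrice_succ_of_advPos_neg hw]
  exact lt_mul_of_one_lt_right (advPrice_pos ε hP₀ σ t) (Real.one_lt_exp_iff.mpr hε)

theorem advPos_mul_advPrice_sub_neg (hε : 0 < ε) (hP₀ : 0 < P₀) (hw : advPos ε P₀ σ t ≠ 0) :
    advPos ε P₀ σ t * (advPrice ε P₀ σ (t + 1) - advPrice ε P₀ σ t) < 0 := by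
  rcases hw.lt_or_gt with hshort | hlong
  · exact mul_neg_of_neg_of_pos hshort
      (sub_pos.mpr (advPrice_lt_succ_of_advPos_neg hε hP₀ hshort))
  · exact mul_neg_of_pos_of_neg hlong
      (sub_neg.mpr (advPrice_succ_lt_of_advPos_pos hε hP₀ hlong))

theorem advPos_mul_advPrice_sub_nonpos (hε : 0 < ε) (hP₀ : 0 < P₀) (σ : List ℝ → ℝ) (t : ℕ) :
    advPos ε P₀ σ t * (advPrice ε P₀ σ (t + 1) - advPrice ε P₀ σ t) ≤ 0 := by
  rcases eq_or_ne (advPos ε P₀ σ t) 0 with hflat | hw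
  · rw [hflat, zero_mul]
  · exact (advPos_mul_advPrice_sub_neg hε hP₀ hw).le

end AdversarialPath

/-- If the strategy takes a nonzero position at some step before `T`, then the
realized profit along the adversarial price path is strictly negative. -/
theorem adversary_strict_loss (ε P₀ : ℝ) (hε : 0 < ε) (hP₀ : 0 < P₀)
    (σ : List ℝ → ℝ) (T : ℕ) (h : ∃ t < T, advPos ε P₀ σ t ≠ 0) :
    advProfit ε P₀ σ T < 0 := by
  obtain ⟨t, htT, hw⟩ := h
  exact Finset.sum_neg' (fun s _ => advPos_mul_advPrice_sub_nonpos hε hP₀ σ s)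
    ⟨t, Finset.mem_range.mpr htT, advPos_mul_advPrice_sub_neg hε hP₀ hw⟩
end

section
/- Let (Ω, 𝓕) be a measurable space carrying two probability measures ℙ and ℚ that are mutually absolutely continuous (equivalent), a filtration (𝓕_n)_{n∈ℕ}, a real-valued price process P = (P_n) that is a ℚ-martingale, and a predictable bounded strategy w = (w_n). Then for every horizon N it is NOT the case that the gains satisfy G_N > 0 ℙ-almost surely. In particular, there is no strategy whose gains are strictly positive on every ω ∈ Ω. (No universally successful strategy exists in any market admitting an equivalent martingale measure.) -/
open MeasureTheory

/-!
The gains of an unbounded strategy need not be integrable, so one cannot simply take expectations.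
Instead, one trading period is treated first: a period gain `B w X`, with `w` known beforehand and
`X` of zero conditional expectation, has zero mean once `w` is cut off where it exceeds `k`, so if
it is nonnegative then it vanishes. For several periods, suppose the final gains are nonnegative.
Trading in the last period only on the event that the gains so far are negative yields a
nonnegative period gain, strictly positive on that event; hence the event is null, and the gains
were already nonnegative one period earlier. Inductively those vanish, and then so does the last
period gain. Gains that are strictly positive under `ℙ` are so under `𝒬 ≪ ℙ`, which is therefore
impossible.
-/

section NoArbitrage

variable {Ω E F : Type*} {m m0 : MeasurableSpace Ω} {μ : Measure Ω}
  [NormedAddCommGroup E] [NormedSpace ℝ E] [NormedAddCommGroup F] [NormedSpace ℝ F]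

section OnePeriod

variable [CompleteSpace E] (B : F →L[ℝ] E →L[ℝ] ℝ) {w : Ω → F} {X : Ω → E}

theorem integral_bilin_eq_zero_of_condExp_ae_eq_zero (hm : m ≤ m0) [SigmaFinite (μ.trim hm)]
    (hw : StronglyMeasurable[m] w) (hX : Integrable X μ)
    (hwX : Integrable (fun ω ↦ B (w ω) (X ω)) μ) (hX_zero : μ[X | m] =ᵐ[μ] 0) :
    ∫ ω, B (w ω) (X ω) ∂μ = 0 := by
  rw [← integral_condExp hm]
  refine integral_eq_zero_of_ae ?_
  filter_upwards [condExp_bilin_of_stronglyMeasurable_left B hw hwX hX, hX_zero]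
    with ω h_pull h_zero
  simp only [h_pull, h_zero, Pi.zero_apply, map_zero]

theorem bilin_ae_eq_zero_of_ae_nonneg_of_norm_le (hm : m ≤ m0) [SigmaFinite (μ.trim hm)]
    (hw : StronglyMeasurable[m] w) {C : ℝ} (hC : ∀ ω, ‖w ω‖ ≤ C) (hX : Integrable X μ)
    (hX_zero : μ[X | m] =ᵐ[μ] 0) (h_nonneg : ∀ᵐ ω ∂μ, 0 ≤ B (w ω) (X ω)) :
    ∀ᵐ ω ∂μ, B (w ω) (X ω) = 0 := by
  have h_int : Integrable (fun ω ↦ B (w ω) (X ω)) μ :=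
    B.integrable_of_bilin_of_bdd_left C (hw.mono hm).aestronglyMeasurable (ae_of_all _ hC) hX
  exact (integral_eq_zero_iff_of_nonneg_ae h_nonneg h_int).1
    (integral_bilin_eq_zero_of_condExp_ae_eq_zero B hm hw hX h_int hX_zero)

theorem bilin_ae_eq_zero_of_ae_nonneg (hm : m ≤ m0) [SigmaFinite (μ.trim hm)]
    (hw : StronglyMeasurable[m] w) (hX : Integrable X μ) (hX_zero : μ[X | m] =ᵐ[μ] 0)
    (h_nonneg : ∀ᵐ ω ∂μ, 0 ≤ B (w ω) (X ω)) : ∀ᵐ ω ∂μ, B (w ω) (X ω) = 0 := by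
  let s (k : ℕ) : Set Ω := {ω | ‖w ω‖ ≤ k}
  have hs (k : ℕ) : MeasurableSet[m] (s k) := hw.norm.measurable measurableSet_Iic
  have h_bound (k : ℕ) (ω : Ω) : ‖(s k).indicator w ω‖ ≤ k := by
    by_cases hω : ω ∈ s k
    · rwa [Set.indicator_of_mem hω]
    · simp only [Set.indicator_of_notMem hω, norm_zero, Nat.cast_nonneg]
  have h_truncated (k : ℕ) : ∀ᵐ ω ∂μ, B ((s k).indicator w ω) (X ω) = 0 := by
    refine bilin_ae_eq_zero_of_ae_nonneg_of_norm_le B hm (hw.indicator (hs k)) (h_bound k) hX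
      hX_zero ?_
    filter_upwards [h_nonneg] with ω hω
    by_cases hωs : ω ∈ s k <;> simp [hωs, hω]
  filter_upwards [ae_all_iff.2 h_truncated] with ω hω
  obtain ⟨k, hk⟩ := exists_nat_ge ‖w ω‖
  simpa only [Set.indicator_of_mem (show ω ∈ s k from hk)] using hω k

theorem measure_eq_zero_of_bilin_pos_on (hm : m ≤ m0) [SigmaFinite (μ.trim hm)] {s : Set Ω}
    (hs : MeasurableSet[m] s) (hw : StronglyMeasurable[m] w) (hX : Integrable X μ)
    (hX_zero : μ[X | m] =ᵐ[μ] 0) (h_pos : ∀ᵐ ω ∂μ, ω ∈ s → 0 < B (w ω) (X ω)) : μ s = 0 := by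
  have h_nonneg : ∀ᵐ ω ∂μ, 0 ≤ B (s.indicator w ω) (X ω) := by
    filter_upwards [h_pos] with ω hω
    by_cases hωs : ω ∈ s
    · simpa only [Set.indicator_of_mem hωs] using (hω hωs).le
    · simp [hωs]
  refine measure_eq_zero_iff_ae_notMem.2 ?_
  filter_upwards [h_pos, bilin_ae_eq_zero_of_ae_nonneg B hm (hw.indicator hs) hX hX_zero h_nonneg]
    with ω hω h_zero hωs
  rw [Set.indicator_of_mem hωs] at h_zero
  exact (hω hωs).ne' h_zero

end OnePeriod

theorem condExp_sub_ae_eq_zero_of_martingale [CompleteSpace E] {ι : Type*} [Preorder ι]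
    {ℱ : Filtration ι m0} {P : ι → Ω → E} (hP : Martingale P ℱ μ) {i j : ι} (hij : i ≤ j) :
    μ[P j - P i | ℱ i] =ᵐ[μ] 0 := by
  calc μ[P j - P i | ℱ i]
      =ᵐ[μ] μ[P j | ℱ i] - μ[P i | ℱ i] := condExp_sub (hP.integrable j) (hP.integrable i) _
    _ =ᵐ[μ] P i - P i := (hP.condExp_ae_eq hij).sub (hP.condExp_ae_eq le_rfl)
    _ = 0 := sub_self _

/-- The gains over the horizon `N` of the strategy `w` in a market with price process `P`.
Positions and prices take values in normed spaces paired by a bilinear map `B`, which covers one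
asset (`B` the multiplication of `ℝ`) as well as several assets (`B` an inner product). -/
noncomputable def gains (B : F →L[ℝ] E →L[ℝ] ℝ) (w : ℕ → Ω → F) (P : ℕ → Ω → E) (N : ℕ)
    (ω : Ω) : ℝ :=
  ∑ n ∈ Finset.range N, B (w n ω) (P (n + 1) ω - P n ω)

section Gains

variable (B : F →L[ℝ] E →L[ℝ] ℝ) {ℱ : Filtration ℕ m0} {w : ℕ → Ω → F} {P : ℕ → Ω → E}

theorem gains_succ (w : ℕ → Ω → F) (P : ℕ → Ω → E) (N : ℕ) (ω : Ω) :
    gains B w P (N + 1) ω = gains B w P N ω + B (w N ω) (P (N + 1) ω - P N ω) :=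
  Finset.sum_range_succ _ _

theorem stronglyAdapted_gains (hw : StronglyAdapted ℱ w) (hP : StronglyAdapted ℱ P) :
    StronglyAdapted ℱ (gains B w P) := fun N ↦ by
  refine Finset.stronglyMeasurable_fun_sum _ fun n hn ↦ ?_
  have hnN : n + 1 ≤ N := Finset.mem_range.1 hn
  exact B.continuous₂.comp_stronglyMeasurable
    ((hw.stronglyMeasurable_le (n.le_succ.trans hnN)).prodMk
      ((hP.stronglyMeasurable_le hnN).sub (hP.stronglyMeasurable_le (n.le_succ.trans hnN))))

variable [CompleteSpace E] [SigmaFiniteFiltration μ ℱ]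

theorem gains_ae_nonneg_of_succ (hP : Martingale P ℱ μ) (hw : StronglyAdapted ℱ w) {N : ℕ}
    (h : ∀ᵐ ω ∂μ, 0 ≤ gains B w P (N + 1) ω) : ∀ᵐ ω ∂μ, 0 ≤ gains B w P N ω := by
  have h_meas : MeasurableSet[ℱ N] {ω | gains B w P N ω < 0} :=
    (stronglyAdapted_gains B hw hP.stronglyAdapted N).measurable measurableSet_Iio
  have h_null : μ {ω | gains B w P N ω < 0} = 0 := by
    refine measure_eq_zero_of_bilin_pos_on B (ℱ.le N) h_meas (hw N)
      ((hP.integrable (N + 1)).sub (hP.integrable N))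
      (condExp_sub_ae_eq_zero_of_martingale hP N.le_succ) ?_
    filter_upwards [h] with ω hω (h_neg : gains B w P N ω < 0)
    rw [gains_succ] at hω
    simp only [Pi.sub_apply]
    linarith
  filter_upwards [measure_eq_zero_iff_ae_notMem.1 h_null] with ω hω
  exact not_lt.1 hω

theorem gains_ae_eq_zero_of_ae_nonneg (hP : Martingale P ℱ μ) (hw : StronglyAdapted ℱ w) {N : ℕ}
    (h : ∀ᵐ ω ∂μ, 0 ≤ gains B w P N ω) : ∀ᵐ ω ∂μ, gains B w P N ω = 0 := by
  induction N with
  | zero => exact ae_of_all _ fun _ ↦ Finset.sum_range_zero _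
  | succ N ih =>
    have h_before : ∀ᵐ ω ∂μ, gains B w P N ω = 0 := ih (gains_ae_nonneg_of_succ B hP hw h)
    have h_last : ∀ᵐ ω ∂μ, B (w N ω) ((P (N + 1) - P N) ω) = 0 := by
      refine bilin_ae_eq_zero_of_ae_nonneg B (ℱ.le N) (hw N)
        ((hP.integrable (N + 1)).sub (hP.integrable N))
        (condExp_sub_ae_eq_zero_of_martingale hP N.le_succ) ?_
      filter_upwards [h, h_before] with ω hω hω_before
      rwa [gains_succ, hω_before, zero_add] at hω
    filter_upwards [h_before, h_last] with ω hω_before hω_last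
    rw [gains_succ, hω_before, zero_add]
    exact hω_last

theorem no_universal_strategy_equivalent_measure_general {ℙ 𝒬 : Measure Ω} [NeZero 𝒬]
    [SigmaFiniteFiltration 𝒬 ℱ] (hQP : 𝒬 ≪ ℙ) (hP : Martingale P ℱ 𝒬)
    (hw : StronglyAdapted ℱ w) (N : ℕ) : ¬ ∀ᵐ ω ∂ℙ, 0 < gains B w P N ω := by
  intro h_pos
  have h_pos' : ∀ᵐ ω ∂𝒬, 0 < gains B w P N ω := hQP.ae_le h_pos
  have h_zero : ∀ᵐ ω ∂𝒬, gains B w P N ω = 0 :=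
    gains_ae_eq_zero_of_ae_nonneg B hP hw (h_pos'.mono fun _ ↦ le_of_lt)
  obtain ⟨ω, hω_pos, hω_zero⟩ := (h_pos'.and h_zero).exists
  exact hω_pos.ne' hω_zero

end Gains

end NoArbitrage

/-- **No universally successful strategy exists in any market admitting an
equivalent martingale measure.**  Let `ℙ` (physical) and `ℚ` (pricing) be
mutually absolutely continuous probability measures on `(Ω, 𝓕)`, let `P` be a
real-valued `ℚ`-martingale with respect to the filtration `ℱ`, and let `w` be
a predictable bounded strategy.  Then for every horizon `N` it is NOT the case
that the gains `G N = ∑_{n<N} w n * (P (n+1) - P n)` are `ℙ`-almost surely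
strictly positive; in particular, there is no strategy whose gains are
strictly positive on every `ω ∈ Ω`. -/
theorem no_universal_strategy_equivalent_measure {Ω : Type*}
    {m0 : MeasurableSpace Ω} (ℙ 𝒬 : Measure Ω)
    [IsProbabilityMeasure ℙ] [IsProbabilityMeasure 𝒬]
    (hPQ : ℙ ≪ 𝒬) (hQP : 𝒬 ≪ ℙ)
    (ℱ : Filtration ℕ m0)
    (P : ℕ → Ω → ℝ) (hP : Martingale P ℱ 𝒬)
    (w : ℕ → Ω → ℝ) (hw : Adapted ℱ w)
    (C : ℝ) (hwbdd : ∀ n ω, |w n ω| ≤ C) (N : ℕ) :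
    ¬ (∀ᵐ ω ∂ℙ, 0 < ∑ n ∈ Finset.range N, w n ω * (P (n + 1) ω - P n ω)) ∧
    ¬ (∀ ω, 0 < ∑ n ∈ Finset.range N, w n ω * (P (n + 1) ω - P n ω)) := by
  have h := no_universal_strategy_equivalent_measure_general (.mul ℝ ℝ) hQP hP
    (fun n ↦ (hw n).stronglyMeasurable) N
  exact ⟨h, fun h_pos ↦ h (ae_of_all _ h_pos)⟩
end

section
/- Let X and Y be finite nonempty sets, let a be any deterministic non-repeating search algorithm over X with observations in Y, and let m ≤ |X|. Then for every fixed value-trace v ∈ Y^m, the number of objective functions f : X → Y for which running a on f for m steps produces exactly the trace v equals |Y|^(|X| − m); in particular this count does not depend on the algorithm a. (Counting form of the No-Free-Lunch theorem.) -/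
/-- A deterministic search rule `a : List (X × Y) → X` is *non-repeating* if,
given any history of distinct queried points paired with observed values such
that unqueried points remain, it outputs a point not previously queried. -/
def NonRepeating {X Y : Type*} [Fintype X] (a : List (X × Y) → X) : Prop :=
  ∀ l : List (X × Y), (l.map Prod.fst).Nodup → l.length < Fintype.card X →
    a l ∉ l.map Prod.fst

/-- Running the algorithm `a` on the objective function `f : X → Y` for `m`
steps: the history of queried points paired with their observed values, in
chronological order. -/
def runAlg {X Y : Type*} (a : List (X × Y) → X) (f : X → Y) : ℕ → List (X × Y)
  | 0 => []
  | m + 1 =>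
    let h := runAlg a f m
    h ++ [(a h, f (a h))]

/-- The value-trace `(f x₁, …, f x_m)` produced by running `a` on `f` for `m`
steps. -/
def valueTrace {X Y : Type*} (a : List (X × Y) → X) (f : X → Y) (m : ℕ) :
    List Y :=
  (runAlg a f m).map Prod.snd

/-!
Reading a trace `v` as the answers to the queries of `a` determines the whole history, with no
reference to the objective function. So `a` produces `v` on `f` exactly when `f` takes the
prescribed values at the `v.length` points of this history, which are distinct because `a` does
not repeat itself; the values of `f` at the remaining points are free.
-/

section Replay

variable {X Y : Type*} (a : List (X × Y) → X)

/-- The history of the search algorithm `a` when its successive queries are answered by the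
entries of `v`. No objective function is involved, so the answers may be inconsistent if `a`
repeats a query. -/
def replay (v : List Y) : List (X × Y) :=
  v.foldl (fun h y => h ++ [(a h, y)]) []

theorem replay_append_singleton (v : List Y) (y : Y) :
    replay a (v ++ [y]) = replay a v ++ [(a (replay a v), y)] := by
  simp only [replay, List.foldl_append, List.foldl_cons, List.foldl_nil]

theorem length_replay (v : List Y) : (replay a v).length = v.length := by
  induction v using List.reverseRecOn with
  | nil => rfl
  | append_singleton v y ih => simp [replay_append_singleton, ih]

variable {a} in
theorem NonRepeating.nodup_map_fst_replay [Fintype X] (ha : NonRepeating a) {v : List Y}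
    (hv : v.length ≤ Fintype.card X) : ((replay a v).map Prod.fst).Nodup := by
  induction v using List.reverseRecOn with
  | nil => exact List.nodup_nil
  | append_singleton v y ih =>
    have hlt : v.length < Fintype.card X := by simpa using hv
    have hfresh : a (replay a v) ∉ (replay a v).map Prod.fst :=
      ha _ (ih hlt.le) (by rwa [length_replay])
    rw [replay_append_singleton, List.map_append]
    exact (ih hlt.le).append (List.nodup_singleton _) (List.disjoint_singleton.2 hfresh)

theorem valueTrace_succ (f : X → Y) (m : ℕ) :
    valueTrace a f (m + 1) = valueTrace a f m ++ [f (a (runAlg a f m))] := by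
  simp only [valueTrace, runAlg, List.map_append, List.map_cons, List.map_nil]

theorem replay_valueTrace (f : X → Y) (m : ℕ) :
    replay a (valueTrace a f m) = runAlg a f m := by
  induction m with
  | zero => rfl
  | succ m ih => rw [valueTrace_succ, replay_append_singleton, ih, runAlg]

theorem valueTrace_eq_iff_forall_mem_replay (f : X → Y) (v : List Y) :
    valueTrace a f v.length = v ↔ ∀ p ∈ replay a v, f p.1 = p.2 := by
  induction v using List.reverseRecOn with
  | nil => simp [valueTrace, runAlg, replay]
  | append_singleton v y ih =>
    calc valueTrace a f (v ++ [y]).length = v ++ [y]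
      _ ↔ valueTrace a f v.length = v ∧ f (a (runAlg a f v.length)) = y := by
        rw [List.length_append, List.length_singleton, valueTrace_succ,
          List.append_singleton_inj]
      _ ↔ valueTrace a f v.length = v ∧ f (a (replay a v)) = y :=
        and_congr_right fun h => by rw [← replay_valueTrace, h]
      _ ↔ ∀ p ∈ replay a (v ++ [y]), f p.1 = p.2 := by
        rw [ih, replay_append_singleton, List.forall_mem_append, List.forall_mem_singleton]

end Replay

section Interpolation

variable {X Y : Type*}

theorem exists_forall_mem_iff_comp_val_eq {l : List (X × Y)} (hl : (l.map Prod.fst).Nodup) :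
    ∃ g : {x // x ∈ l.map Prod.fst} → Y,
      ∀ f : X → Y, (∀ p ∈ l, f p.1 = p.2) ↔ f ∘ Subtype.val = g := by
  choose entry entry_mem fst_entry using
    fun x : {x // x ∈ l.map Prod.fst} => List.mem_map.1 x.2
  refine ⟨fun x => (entry x).2, fun f => ⟨fun hf => funext fun x => ?_, fun hf p hp => ?_⟩⟩
  · rw [Function.comp_apply, ← fst_entry x, hf _ (entry_mem x)]
  · let x : {x // x ∈ l.map Prod.fst} := ⟨p.1, List.mem_map_of_mem hp⟩
    have entry_eq : entry x = p := List.inj_on_of_nodup_map hl (entry_mem x) hp (fst_entry x)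
    exact (congrFun hf x).trans (congrArg Prod.snd entry_eq)

theorem card_subtype_notMem_of_nodup [Fintype X] {l : List X} [Fintype {x // x ∉ l}]
    (hl : l.Nodup) : Fintype.card {x // x ∉ l} = Fintype.card X - l.length := by
  classical
  rw [Fintype.card_subtype_compl (· ∈ l), Fintype.card_of_subtype l.toFinset (by simp),
    List.toFinset_card_of_nodup hl]

theorem nonempty_interpolants_equiv [Fintype X] {l : List (X × Y)}
    (hl : (l.map Prod.fst).Nodup) :
    Nonempty ({f : X → Y // ∀ p ∈ l, f p.1 = p.2} ≃
      (Fin (Fintype.card X - l.length) → Y)) := by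
  classical
  obtain ⟨g, hg⟩ := exists_forall_mem_iff_comp_val_eq hl
  have hcard : Fintype.card {x // x ∉ l.map Prod.fst} = Fintype.card X - l.length := by
    rw [card_subtype_notMem_of_nodup hl, List.length_map]
  exact ⟨(Equiv.subtypeEquivRight hg).trans <| (Equiv.subtypePreimage _ g).trans <|
    (Fintype.equivFinOfCardEq hcard).arrowCongr (Equiv.refl Y)⟩

end Interpolation

theorem no_free_lunch_counting_general {X Y : Type*} [Fintype X] (a : List (X × Y) → X)
    (ha : NonRepeating a) (m : ℕ) (hm : m ≤ Fintype.card X) (v : List Y) (hv : v.length = m) :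
    Nonempty ({f : X → Y // valueTrace a f m = v} ≃ (Fin (Fintype.card X - m) → Y)) := by
  subst hv
  obtain ⟨e⟩ := nonempty_interpolants_equiv (ha.nodup_map_fst_replay hm)
  rw [length_replay] at e
  exact ⟨(Equiv.subtypeEquivRight fun f => valueTrace_eq_iff_forall_mem_replay a f v).trans e⟩

/-- **Counting form of the No-Free-Lunch theorem.**
Let `X` and `Y` be finite nonempty sets, `a` any deterministic non-repeating
search algorithm over `X` with observations in `Y`, and `m ≤ |X|`.  For every
fixed value-trace `v ∈ Y^m`, the number of objective functions `f : X → Y` on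
which running `a` for `m` steps produces exactly the trace `v` equals
`|Y| ^ (|X| - m)`; in particular this count does not depend on `a`. -/
theorem no_free_lunch_counting {X Y : Type*} [Fintype X] [Fintype Y]
    [DecidableEq X] [DecidableEq Y] [Nonempty X] [Nonempty Y]
    (a : List (X × Y) → X) (ha : NonRepeating a)
    (m : ℕ) (hm : m ≤ Fintype.card X) (v : List Y) (hv : v.length = m) :
    (Finset.univ.filter fun f : X → Y => valueTrace a f m = v).card =
      Fintype.card Y ^ (Fintype.card X - m) := by
  obtain ⟨e⟩ := no_free_lunch_counting_general a ha m hm v hv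
  rw [← Fintype.card_subtype, Fintype.card_congr e, Fintype.card_pi_const]
end
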